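/- arXiv:1103.3693 — 7 statements merged into one kernel-verified Lean document; each statement's English description precedes it below -/
import Mathlib

section
/- A generalised multi-clause-set F admits a decomposition F = F_1 + … + F_m (multiset sum, m ≥ 0) together with pairwise distinct variables v_1, …, v_m such that for each i every clause C of F_i satisfies v_i ∈ var(C) and |D_{v_i}| > c(F_i), if and only if the bipartite graph B(F) has a matching covering all clause-nodes (i.e., if and only if F is matching satisfiable). -/
set_option linter.unusedSectionVars false
set_option linter.unusedVariables false

open scoped Classical

namespace GCLS

variable {V α : Type} [DecidableEq V] [DecidableEq α]

/-- A finite "functional" set of (variable, value) pairs, with values inside the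
given domains `D`; used both for clauses and for partial assignments. -/
def FinFn (D : V → Finset α) : Type :=
  { s : Finset (V × α) // (∀ p ∈ s, p.2 ∈ D p.1) ∧
      ∀ p ∈ s, ∀ q ∈ s, p.1 = q.1 → p = q }

variable {D : V → Finset α}

instance : DecidableEq (FinFn D) :=
  fun a b => decidable_of_iff (a.1 = b.1) Subtype.ext_iff.symm

namespace FinFn

/-- The set of variables occurring. -/
def vars (s : FinFn D) : Finset V := s.1.image Prod.fst

/-- Restriction to the pairs whose variable lies in `W`. -/
def restrictVars (s : FinFn D) (W : Finset V) : FinFn D :=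
  ⟨s.1.filter (fun p => p.1 ∈ W),
   fun p hp => s.2.1 p (Finset.mem_filter.mp hp).1,
   fun p hp q hq h =>
     s.2.2 p (Finset.mem_filter.mp hp).1 q (Finset.mem_filter.mp hq).1 h⟩

/-- Removal of a set of pairs. -/
def sdiff (s : FinFn D) (t : Finset (V × α)) : FinFn D :=
  ⟨s.1 \ t,
   fun p hp => s.2.1 p (Finset.mem_sdiff.mp hp).1,
   fun p hp q hq h =>
     s.2.2 p (Finset.mem_sdiff.mp hp).1 q (Finset.mem_sdiff.mp hq).1 h⟩

end FinFn

/-- Clauses: finite sets of literals `(v,ε)` (meaning "v ≠ ε"), at most one literal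
per variable, values inside the domains. -/
abbrev Clause (D : V → Finset α) := FinFn D

/-- Partial assignments: finitely many variables get values inside their domains. -/
abbrev PAssign (D : V → Finset α) := FinFn D

/-- `φ` satisfies the literal `(v,ε)` (i.e. "v ≠ ε"): `v` is assigned a value ≠ `ε`. -/
def SatLit (φ : PAssign D) (l : V × α) : Prop :=
  ∃ ε, (l.1, ε) ∈ φ.1 ∧ ε ≠ l.2

/-- `φ` satisfies a clause iff it satisfies some literal of it. -/
def SatClause (φ : PAssign D) (C : Clause D) : Prop :=
  ∃ l ∈ C.1, SatLit φ l

/-- The clause obtained from `C` by deleting all literals falsified by `φ`. -/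
def Clause.restrict (φ : PAssign D) (C : Clause D) : Clause D :=
  FinFn.sdiff C φ.1

/-- The operation `φ * F` on multi-clause-sets: remove all clauses satisfied by `φ`
and delete all falsified literals from the remaining clauses. -/
noncomputable def applyM (φ : PAssign D) (F : Multiset (Clause D)) : Multiset (Clause D) :=
  (F.filter (fun C => ¬ SatClause φ C)).map (Clause.restrict φ)

/-- The operation `φ * F` on clause-sets (with contraction of equal clauses). -/
noncomputable def applyF (φ : PAssign D) (F : Finset (Clause D)) : Finset (Clause D) :=
  (F.filter (fun C => ¬ SatClause φ C)).image (Clause.restrict φ)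

/-- Satisfiability: some partial assignment satisfies all clauses. -/
def Sat (F : Multiset (Clause D)) : Prop :=
  ∃ φ : PAssign D, applyM φ F = 0

/-- Minimal unsatisfiability of a clause-set. -/
def MinUnsat (F : Finset (Clause D)) : Prop :=
  ¬ Sat F.val ∧ ∀ F' ⊂ F, Sat F'.val

/-- The variables of a multi-clause-set. -/
def mvars (F : Multiset (Clause D)) : Finset V := F.toFinset.sup FinFn.vars

/-- The deficiency `δ(F) = c(F) - Σ_{v ∈ var(F)} (|D_v| - 1)`. -/
def delta (F : Multiset (Clause D)) : ℤ :=
  (Multiset.card F : ℤ) - ∑ v ∈ mvars F, ((D v).card - 1 : ℤ)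

lemma powerset_toFinset_nonempty (F : Multiset (Clause D)) :
    F.powerset.toFinset.Nonempty :=
  ⟨0, by simp⟩

/-- The maximal deficiency `δ*(F) = max {δ(F') : F' ≤ F}`. -/
noncomputable def deltaStar (F : Multiset (Clause D)) : ℤ :=
  F.powerset.toFinset.sup' (powerset_toFinset_nonempty F) delta

/-- A tight sub-multi-clause-set: `F' ≤ F` with `δ(F') = δ*(F)`. -/
noncomputable def Tight (F F' : Multiset (Clause D)) : Prop :=
  F' ≤ F ∧ delta F' = deltaStar F

/-- `F` is matching satisfiable: the clause-variable graph `B(F)` has a matching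
covering all clause-nodes.  Such a matching is encoded as a multiset `P` of pairs
(clause-occurrence, variable-node), where the variable-nodes `(v,k)`,
`k < |D v| - 1`, are the copies of the variable `v`; the matching covers each
clause-occurrence exactly once (`P.map Prod.fst = F`), uses pairwise distinct
variable-nodes, and respects adjacency in `B(F)`. -/
def MatchingSat (F : Multiset (Clause D)) : Prop :=
  ∃ P : Multiset (Clause D × (V × ℕ)),
    P.map Prod.fst = F ∧ (P.map Prod.snd).Nodup ∧
    ∀ p ∈ P, p.2.1 ∈ FinFn.vars p.1 ∧ p.2.2 < (D p.2.1).card - 1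

/-- The edge between clause `C` and the copies of variable `v` is retained in
`B_φ(F)`: the literal of `C` with variable `v` is satisfied by `φ`. -/
def EdgeSat (φ : PAssign D) (C : Clause D) (v : V) : Prop :=
  ∃ ε, (v, ε) ∈ C.1 ∧ SatLit φ (v, ε)

/-- `φ` is matching-satisfying for `F`: `B_φ(F)` has a matching covering all
clause-nodes. -/
def MatchingSatisfying (φ : PAssign D) (F : Multiset (Clause D)) : Prop :=
  ∃ P : Multiset (Clause D × (V × ℕ)),
    P.map Prod.fst = F ∧ (P.map Prod.snd).Nodup ∧
    ∀ p ∈ P, p.2.2 < (D p.2.1).card - 1 ∧ EdgeSat φ p.1 p.2.1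

/-- The maximum size of a matching in `B(F)`. -/
noncomputable def nu (F : Multiset (Clause D)) : ℕ :=
  sSup { k | ∃ P : Multiset (Clause D × (V × ℕ)),
    P.map Prod.fst ≤ F ∧ (P.map Prod.snd).Nodup ∧
    (∀ p ∈ P, p.2.1 ∈ FinFn.vars p.1 ∧ p.2.2 < (D p.2.1).card - 1) ∧
    Multiset.card P = k }

/-- The maximum size of a matching in `B_φ(F)`. -/
noncomputable def nuSub (φ : PAssign D) (F : Multiset (Clause D)) : ℕ :=
  sSup { k | ∃ P : Multiset (Clause D × (V × ℕ)),
    P.map Prod.fst ≤ F ∧ (P.map Prod.snd).Nodup ∧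
    (∀ p ∈ P, p.2.2 < (D p.2.1).card - 1 ∧ EdgeSat φ p.1 p.2.1) ∧
    Multiset.card P = k }

/-- `φ` is matching-maximum for `F`. -/
noncomputable def MatchingMaximum (φ : PAssign D) (F : Multiset (Clause D)) : Prop :=
  nuSub φ F = nu F

/-- `φ` is an autarky for `F`: every clause touched by `φ` is satisfied by `φ`. -/
def IsAutarky (φ : PAssign D) (F : Multiset (Clause D)) : Prop :=
  ∀ C ∈ F, (FinFn.vars C ∩ FinFn.vars φ).Nonempty → SatClause φ C

/-- `F` is lean: it has no non-trivial autarky. -/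
def IsLean (F : Multiset (Clause D)) : Prop :=
  ¬ ∃ φ : PAssign D, IsAutarky φ F ∧ (FinFn.vars φ ∩ mvars F).Nonempty

/-- The sub-multi-clause-set of clauses touched by the variables in `W`. -/
noncomputable def touchedBy (F : Multiset (Clause D)) (W : Finset V) : Multiset (Clause D) :=
  F.filter (fun C => (FinFn.vars C ∩ W).Nonempty)

/-- The restriction `F[W]`: keep the clauses touching `W` and delete from them all
literals whose variable is not in `W`. -/
noncomputable def restrictTo (F : Multiset (Clause D)) (W : Finset V) : Multiset (Clause D) :=
  (touchedBy F W).map (fun C => FinFn.restrictVars C W)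

/-- `φ` is a matching autarky for `F`: `φ` is matching-satisfying for the
sub-multi-clause-set of clauses touched by `φ`. -/
noncomputable def IsMatchingAutarky (φ : PAssign D) (F : Multiset (Clause D)) : Prop :=
  MatchingSatisfying φ (touchedBy F (FinFn.vars φ))

/-- `F` is matching lean: no non-trivial matching autarky. -/
noncomputable def MatchingLean (F : Multiset (Clause D)) : Prop :=
  ¬ ∃ φ : PAssign D, IsMatchingAutarky φ F ∧ (FinFn.vars φ ∩ mvars F).Nonempty

lemma surp_nonempty {F : Multiset (Clause D)} (h : (mvars F).Nonempty) :
    ((mvars F).powerset.erase ∅).Nonempty := by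
  obtain ⟨v, hv⟩ := h
  refine ⟨{v}, ?_⟩
  simp [Finset.mem_erase, Finset.singleton_subset_iff, hv]

/-- The surplus `surp(F) = min {δ(F[W]) : ∅ ≠ W ⊆ var(F)}` (and `0` if `var(F) = ∅`). -/
noncomputable def surp (F : Multiset (Clause D)) : ℤ :=
  if h : (mvars F).Nonempty then
    ((mvars F).powerset.erase ∅).inf' (surp_nonempty h)
      (fun W => delta (restrictTo F W))
  else 0

/-- The number of occurrences of the literal `l` in `F`. -/
noncomputable def litCount (F : Multiset (Clause D)) (l : V × α) : ℕ :=
  Multiset.card (F.filter (fun C => l ∈ C.1))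

/-- The number of occurrences `#_v(F)` of the variable `v` in `F`. -/
noncomputable def varCount (F : Multiset (Clause D)) (v : V) : ℕ :=
  ∑ ε ∈ D v, litCount F (v, ε)

/-- The partial assignment `⟨v → ε⟩`. -/
def single (v : V) (ε : α) (hε : ε ∈ D v) : PAssign D :=
  ⟨{(v, ε)}, by
    refine ⟨?_, ?_⟩
    · intro p hp
      rw [Finset.mem_singleton] at hp
      subst hp; exact hε
    · intro p hp q hq _
      rw [Finset.mem_singleton] at hp hq
      subst hp; subst hq; rfl⟩

/-- Composition `φ ∘ ψ` of partial assignments: domain is the union of the domains,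
`ψ` taking precedence. -/
def comp (φ ψ : PAssign D) : PAssign D :=
  ⟨ψ.1 ∪ φ.1.filter (fun p => p.1 ∉ FinFn.vars ψ), by
    constructor
    · intro p hp
      rcases Finset.mem_union.mp hp with h | h
      · exact ψ.2.1 p h
      · exact φ.2.1 p (Finset.mem_filter.mp h).1
    · intro p hp q hq hpq
      rcases Finset.mem_union.mp hp with h1 | h1 <;>
        rcases Finset.mem_union.mp hq with h2 | h2
      · exact ψ.2.2 p h1 q h2 hpq
      · exact absurd (hpq ▸ Finset.mem_image_of_mem Prod.fst h1)
          (Finset.mem_filter.mp h2).2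
      · exact absurd (hpq.symm ▸ Finset.mem_image_of_mem Prod.fst h2)
          (Finset.mem_filter.mp h1).2
      · exact φ.2.2 p (Finset.mem_filter.mp h1).1 q (Finset.mem_filter.mp h2).1 hpq⟩

/-- Two clauses clash (in some variable). -/
def Clash (C C' : Clause D) : Prop :=
  ∃ v ε ε', (v, ε) ∈ C.1 ∧ (v, ε') ∈ C'.1 ∧ ε ≠ ε'

/-- The number of variables in which two clauses clash. -/
noncomputable def clashCount (C C' : Clause D) : ℕ :=
  ((FinFn.vars C).filter
    (fun v => ∃ ε ε', (v, ε) ∈ C.1 ∧ (v, ε') ∈ C'.1 ∧ ε ≠ ε')).card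

/-- Hitting clause-sets: every two distinct clauses clash. -/
def Hitting (F : Finset (Clause D)) : Prop :=
  ∀ C ∈ F, ∀ C' ∈ F, C ≠ C' → Clash C C'

/-- Boolean clauses over the boolean variables `V × α` (one boolean variable per
generalised literal; the value `false` gives the positive boolean literal). -/
abbrev BClause (V α : Type) :=
  Clause (fun _ : V × α => (Finset.univ : Finset Bool))

/-- The direct translation of a single clause: each literal `(v,ε)` is replaced by
the positive boolean literal of the boolean variable `(v,ε)`. -/
def dirClause (C : Clause D) : BClause V α :=
  ⟨C.1.image (fun p => (p, false)), by
    constructor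
    · intro p _; exact Finset.mem_univ _
    · intro p hp q hq h
      simp only [Finset.mem_image] at hp hq
      obtain ⟨a, -, rfl⟩ := hp
      obtain ⟨b, -, rfl⟩ := hq
      exact congrArg (fun x => (x, false)) h⟩

/-- The ALO-clause for a variable `v`: the negative boolean literals of the boolean
variables `(v,ε)` for `ε ∈ D v`. -/
def aloClause (D : V → Finset α) (v : V) : BClause V α :=
  ⟨(D v).image (fun ε => ((v, ε), true)), by
    constructor
    · intro p _; exact Finset.mem_univ _
    · intro p hp q hq h
      simp only [Finset.mem_image] at hp hq
      obtain ⟨a, -, rfl⟩ := hp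
      obtain ⟨b, -, rfl⟩ := hq
      exact congrArg (fun x => (x, true)) h⟩

/-- The direct translation `Γ(F)`: the translated clauses together with the
ALO-clauses for all occurring variables. -/
noncomputable def dirTrans (F : Finset (Clause D)) : Finset (BClause V α) :=
  F.image dirClause ∪ (mvars F.val).image (aloClause D)

theorem exists_block (v : V) (G : Multiset (Clause D)) :
    ∃ P : Multiset (Clause D × (V × ℕ)), P.map Prod.fst = G ∧ (P.map Prod.snd).Nodup ∧
      ∀ p ∈ P, p.2.1 = v ∧ p.2.2 < Multiset.card G := by
  induction G using Multiset.induction with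
  | empty => exact ⟨0, by simp⟩
  | cons C G ih =>
    obtain ⟨P, h1, h2, h3⟩ := ih
    refine ⟨(C, (v, Multiset.card G)) ::ₘ P, by simp [h1], ?_, ?_⟩
    · rw [Multiset.map_cons, Multiset.nodup_cons]
      refine ⟨?_, h2⟩
      intro h
      obtain ⟨p, hp, he⟩ := Multiset.mem_map.mp h
      have := (h3 p hp).2
      rw [he] at this
      simp at this
    · intro p hp
      rw [Multiset.card_cons]
      rcases Multiset.mem_cons.mp hp with rfl | hp
      · simp
      · exact ⟨(h3 p hp).1, by have := (h3 p hp).2; omega⟩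

theorem exists_sum {m : ℕ} (Fs : Fin m → Multiset (Clause D)) (vs : Fin m → V)
    (hv : Function.Injective vs)
    (h : ∀ i, (∀ C ∈ Fs i, vs i ∈ FinFn.vars C) ∧ Multiset.card (Fs i) < (D (vs i)).card)
    (s : Finset (Fin m)) :
    ∃ P : Multiset (Clause D × (V × ℕ)), P.map Prod.fst = ∑ i ∈ s, Fs i ∧
      (P.map Prod.snd).Nodup ∧
      ∀ p ∈ P, (∃ i ∈ s, p.2.1 = vs i) ∧
        p.2.1 ∈ FinFn.vars p.1 ∧ p.2.2 < (D p.2.1).card - 1 := by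
  induction s using Finset.induction_on with
  | empty => exact ⟨0, by simp⟩
  | insert a s ha ih =>
    obtain ⟨P, h1, h2, h3⟩ := ih
    obtain ⟨Q, q1, q2, q3⟩ := exists_block (vs a) (Fs a)
    refine ⟨Q + P, ?_, ?_, ?_⟩
    · rw [Multiset.map_add, q1, h1, Finset.sum_insert ha]
    · rw [Multiset.map_add, Multiset.nodup_add]
      refine ⟨q2, h2, ?_⟩
      rw [Multiset.disjoint_left]
      intro x hx hx'
      obtain ⟨p, hp, rfl⟩ := Multiset.mem_map.mp hx
      obtain ⟨p', hp', he⟩ := Multiset.mem_map.mp hx'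
      obtain ⟨i, hi, hi'⟩ := (h3 p' hp').1
      rw [he, (q3 p hp).1] at hi'
      exact ha (hv hi' ▸ hi)
    · intro p hp
      rcases Multiset.mem_add.mp hp with hp | hp
      · obtain ⟨e, l⟩ := q3 p hp
        have hm : p.1 ∈ Fs a := q1 ▸ Multiset.mem_map_of_mem Prod.fst hp
        refine ⟨⟨a, by simp, e⟩, ?_, ?_⟩
        · rw [e]; exact (h a).1 _ hm
        · rw [e]; have := (h a).2; omega
      · obtain ⟨⟨i, hi, hi'⟩, r⟩ := h3 p hp
        exact ⟨⟨i, by simp [hi], hi'⟩, r⟩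

theorem sum_filter_fiber {β : Type} (f : β → V) (P : Multiset β) (W : Finset V)
    (h : ∀ p ∈ P, f p ∈ W) : ∑ v ∈ W, P.filter (fun p => f p = v) = P := by
  induction P using Multiset.induction with
  | empty => simp
  | cons a P ih =>
    have h1 := ih (fun p hp => h p (Multiset.mem_cons_of_mem hp))
    have h2 : f a ∈ W := h a (Multiset.mem_cons_self a P)
    simp only [Multiset.filter_cons, Finset.sum_add_distrib, h1]
    rw [Finset.sum_ite_eq]
    simp [h2]

/-- `F` admits a decomposition `F = F₁ + … + F_m` with pairwise distinct
variables `v₁, …, v_m` such that every clause of `Fᵢ` contains `vᵢ` and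
`|D_{vᵢ}| > c(Fᵢ)`, iff the bipartite graph `B(F)` has a matching covering all
clause-nodes (i.e. iff `F` is matching satisfiable). -/
theorem matching_sat_iff_decomposition
    (hD : ∀ v, (D v).Nonempty) (F : Multiset (Clause D)) :
    (∃ (m : ℕ) (Fs : Fin m → Multiset (Clause D)) (vs : Fin m → V),
       Function.Injective vs ∧ (∑ i, Fs i) = F ∧
       ∀ i, (∀ C ∈ Fs i, vs i ∈ FinFn.vars C) ∧
            Multiset.card (Fs i) < (D (vs i)).card) ↔
    MatchingSat F := by
  constructor
  · rintro ⟨m, Fs, vs, hv, rfl, h⟩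
    obtain ⟨P, h1, h2, h3⟩ := exists_sum Fs vs hv h Finset.univ
    exact ⟨P, h1, h2, fun p hp => (h3 p hp).2⟩
  · rintro ⟨P, rfl, h2, h3⟩
    let W : Finset V := (P.map (fun p => p.2.1)).toFinset
    let e := W.equivFin
    have hW : ∀ p ∈ P, p.2.1 ∈ W := fun p hp =>
      Multiset.mem_toFinset.mpr (Multiset.mem_map_of_mem (fun p => p.2.1) hp)
    let G : V → Multiset (Clause D) := fun v => (P.filter (fun p => p.2.1 = v)).map Prod.fst
    refine ⟨W.card, fun i => G (e.symm i), fun i => (e.symm i : V),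
      Subtype.val_injective.comp e.symm.injective, ?_, ?_⟩
    · rw [e.symm.sum_comp (fun x : W => G x), Finset.sum_coe_sort W G]
      conv_rhs => rw [← sum_filter_fiber (fun p => p.2.1) P W hW]
      exact (map_sum (Multiset.mapAddMonoidHom Prod.fst) _ W).symm
    · intro i
      beta_reduce
      generalize ((e.symm i : W) : V) = v
      constructor
      · intro C hC
        obtain ⟨p, hp, rfl⟩ := Multiset.mem_map.mp hC
        obtain ⟨hp', rfl⟩ := Multiset.mem_filter.mp hp
        exact (h3 p hp').1
      · have hn : (((P.filter (fun p => p.2.1 = v)).map Prod.snd).map Prod.snd).Nodup := by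
          refine Multiset.Nodup.map_on ?_
            (Multiset.nodup_of_le (Multiset.map_le_map (Multiset.filter_le _ P)) h2)
          intro x hx y hy hxy
          obtain ⟨p, hp, rfl⟩ := Multiset.mem_map.mp hx
          obtain ⟨q, hq, rfl⟩ := Multiset.mem_map.mp hy
          exact Prod.ext ((Multiset.mem_filter.mp hp).2.trans (Multiset.mem_filter.mp hq).2.symm) hxy
        have hle : ((P.filter (fun p => p.2.1 = v)).map Prod.snd).map Prod.snd
            ≤ Multiset.range ((D v).card - 1) := by
          rw [Multiset.le_iff_subset hn]
          intro k hk
          rw [Multiset.map_map] at hk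
          obtain ⟨p, hp, rfl⟩ := Multiset.mem_map.mp hk
          obtain ⟨hp', rfl⟩ := Multiset.mem_filter.mp hp
          exact Multiset.mem_range.mpr (h3 p hp').2
        have hc := Multiset.card_le_card hle
        have := (hD v).card_pos
        simp only [Multiset.card_map, Multiset.card_range] at hc
        simp only [G, Multiset.card_map]
        omega

end GCLS
end

section
/- For every generalised multi-clause-set F: (1) the maximum of c(F') over all matching satisfiable sub-multisets F' of F equals c(F) − δ*(F); (2) F is matching satisfiable if and only if δ*(F) = 0. -/
set_option linter.unusedSectionVars false
set_option linter.unusedVariables false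

open scoped Classical

namespace GCLS

variable {V α : Type} [DecidableEq V] [DecidableEq α]

variable {D : V → Finset α}

/-- nodes -/
def nodes (D : V → Finset α) (W : Finset V) : Finset (V × ℕ) :=
  W.biUnion fun v => (Finset.range ((D v).card - 1)).image (fun k => (v, k))

lemma mem_nodes (W : Finset V) (x : V × ℕ) :
    x ∈ nodes D W ↔ x.1 ∈ W ∧ x.2 < (D x.1).card - 1 := by
  obtain ⟨v, k⟩ := x
  simp only [nodes, Finset.mem_biUnion, Finset.mem_image, Finset.mem_range, Prod.mk.injEq]
  constructor
  · rintro ⟨a, ha, b, hb, rfl, rfl⟩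
    exact ⟨ha, hb⟩
  · rintro ⟨ha, hb⟩
    exact ⟨v, ha, k, hb, rfl, rfl⟩

lemma card_nodes (hD : ∀ v, (D v).Nonempty) (W : Finset V) :
    ((nodes D W).card : ℤ) = ∑ v ∈ W, ((D v).card - 1 : ℤ) := by
  unfold nodes
  rw [Finset.card_biUnion]
  · rw [Nat.cast_sum]
    refine Finset.sum_congr rfl fun v _ => ?_
    rw [Finset.card_image_of_injective _ (fun a b h => (Prod.mk.inj h).2), Finset.card_range]
    have := (hD v).card_pos
    omega
  · intro a _ b _ hab
    rw [Function.onFun, Finset.disjoint_left]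
    intro x hx hy
    simp only [Finset.mem_image] at hx hy
    obtain ⟨_, _, rfl⟩ := hx
    obtain ⟨_, _, h⟩ := hy
    exact hab (Prod.mk.inj h).1.symm

lemma mem_mvars (F : Multiset (Clause D)) (v : V) :
    v ∈ mvars F ↔ ∃ C ∈ F, v ∈ FinFn.vars C := by
  simp [mvars, Finset.mem_sup]

lemma delta_le (F G : Multiset (Clause D)) (h : G ≤ F) : delta G ≤ deltaStar F :=
  Finset.le_sup' delta (by simpa using h)

lemma exists_delta (F : Multiset (Clause D)) : ∃ G ≤ F, delta G = deltaStar F := by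
  obtain ⟨G, hG, h⟩ := Finset.exists_mem_eq_sup' (powerset_toFinset_nonempty F) delta
  exact ⟨G, by simpa using hG, h.symm⟩

lemma deltaStar_nonneg (F : Multiset (Clause D)) : 0 ≤ deltaStar F := by
  have := delta_le F 0 (Multiset.zero_le _)
  simpa [delta, mvars] using this

lemma upper (hD : ∀ v, (D v).Nonempty) (F F' : Multiset (Clause D)) (h : F' ≤ F)
    (hm : MatchingSat F') : (Multiset.card F' : ℤ) ≤ Multiset.card F - deltaStar F := by
  obtain ⟨G, hG, hd⟩ := exists_delta F
  obtain ⟨P, rfl, hn, hP⟩ := hm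
  rw [← hd, delta, ← card_nodes hD]
  set p : Clause D × (V × ℕ) → Prop := fun x => x.2.1 ∈ mvars G with hp
  have h1 : Multiset.card (P.filter p) ≤ (nodes D (mvars G)).card := by
    rw [← Multiset.card_map Prod.snd (P.filter p)]
    refine Multiset.card_le_card ((Multiset.le_iff_subset ?_).2 ?_)
    · exact Multiset.nodup_of_le (Multiset.map_le_map (Multiset.filter_le p P)) hn
    · intro x hx
      obtain ⟨y, hy, rfl⟩ := Multiset.mem_map.1 hx
      rw [Multiset.mem_filter] at hy
      exact (mem_nodes _ _).2 ⟨hy.2, (hP y hy.1).2⟩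
  have h2 : Multiset.card (P.filter fun x => ¬ p x) + Multiset.card G ≤ Multiset.card F := by
    rw [← Multiset.card_map Prod.fst, ← Multiset.card_add]
    refine Multiset.card_le_card ?_
    have hdis : Disjoint ((P.filter fun x => ¬ p x).map Prod.fst) G := by
      rw [Multiset.disjoint_left]
      intro C hC hCG
      obtain ⟨y, hy, rfl⟩ := Multiset.mem_map.1 hC
      rw [Multiset.mem_filter] at hy
      exact hy.2 ((mem_mvars _ _).2 ⟨_, hCG, (hP y hy.1).1⟩)
    rw [Multiset.add_eq_union_iff_disjoint.2 hdis]
    exact Multiset.union_le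
      ((Multiset.map_le_map (Multiset.filter_le _ P)).trans h) hG
  have h3 : Multiset.card (P.filter p) + Multiset.card (P.filter fun x => ¬ p x)
      = Multiset.card P := by
    rw [← Multiset.card_add, Multiset.filter_add_not]
  rw [Multiset.card_map]
  omega

lemma lower (hD : ∀ v, (D v).Nonempty) (F : Multiset (Clause D)) :
    ∃ F' ≤ F, MatchingSat F' ∧ (Multiset.card F : ℤ) - deltaStar F ≤ Multiset.card F' := by
  obtain ⟨n, g, rfl⟩ : ∃ (n : ℕ) (g : Fin n → Clause D),
      F = (Finset.univ : Finset (Fin n)).val.map g := by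
    induction F using Quotient.inductionOn with
    | h l => exact ⟨l.length, l.get, by simp⟩
  set F := (Finset.univ : Finset (Fin n)).val.map g with hF
  obtain ⟨d, hd⟩ := Int.eq_ofNat_of_zero_le (deltaStar_nonneg F)
  have hall := (Finset.all_card_le_biUnion_card_iff_exists_injective
    (fun i : Fin n => (nodes D (FinFn.vars (g i))).disjSum (Finset.univ : Finset (Fin d)))).1 ?_
  · obtain ⟨f, hf, hft⟩ := hall
    set S : Finset (Fin n) := Finset.univ.filter (fun i => (f i).isLeft) with hS
    have hx : ∀ i ∈ S, ∃ x ∈ nodes D (FinFn.vars (g i)), f i = Sum.inl x := by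
      intro i hi
      have h1 := (Finset.mem_filter.1 hi).2
      have h2 := hft i
      rw [Finset.mem_disjSum] at h2
      rcases h2 with ⟨a, ha, h⟩ | ⟨a, _, h⟩
      · exact ⟨a, ha, h.symm⟩
      · rw [← h] at h1; simp at h1
    choose x hx1 hx2 using hx
    refine ⟨S.val.map g, Multiset.map_le_map (Finset.val_le_iff.2 (Finset.subset_univ _)),
      ⟨S.attach.val.map (fun i => (g i.1, x i.1 i.2)), ?_, ?_, ?_⟩, ?_⟩
    · rw [Multiset.map_map]
      exact Multiset.attach_map_val' S.val g
    · rw [Multiset.map_map]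
      refine Multiset.Nodup.map_on ?_ S.attach.nodup
      intro a ha b hb hab
      apply Subtype.ext
      apply hf
      rw [hx2 a.1 a.2, hx2 b.1 b.2]
      exact congrArg Sum.inl hab
    · intro q hq
      obtain ⟨i, hi, rfl⟩ := Multiset.mem_map.1 hq
      exact (mem_nodes _ _).1 (hx1 i.1 i.2)
    · have hc : Sᶜ.card ≤ d := by
        rw [← Finset.card_image_of_injective _ hf]
        have : Sᶜ.image f ⊆
            (Finset.univ : Finset (Fin d)).image Sum.inr := by
          intro y hy
          obtain ⟨i, hi, rfl⟩ := Finset.mem_image.1 hy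
          have := Finset.mem_compl.1 hi
          cases h : f i with
          | inl a => simp [hS, h] at this
          | inr a => simp
        refine (Finset.card_le_card this).trans (Finset.card_image_le.trans ?_)
        simp
      have ht := Finset.card_add_card_compl S
      rw [hd, hF, Multiset.card_map, Multiset.card_map]
      simp only [Finset.card_val]
      simp only [Finset.card_univ, Fintype.card_fin] at ht ⊢
      omega
  · intro s
    rcases s.eq_empty_or_nonempty with rfl | ⟨i0, hi0⟩
    · simp
    have h1 := delta_le F (s.val.map g)
      (Multiset.map_le_map (Finset.val_le_iff.2 (Finset.subset_univ _)))
    rw [delta, ← card_nodes hD, hd, Multiset.card_map, Finset.card_val] at h1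
    have h2 : (nodes D (mvars (s.val.map g))).disjSum (Finset.univ : Finset (Fin d)) ⊆
        s.biUnion fun i => (nodes D (FinFn.vars (g i))).disjSum Finset.univ := by
      intro y hy
      rw [Finset.mem_biUnion]
      rcases Finset.mem_disjSum.1 hy with ⟨a, ha, rfl⟩ | ⟨a, _, rfl⟩
      · obtain ⟨ha1, ha2⟩ := (mem_nodes _ _).1 ha
        obtain ⟨C, hC, hv⟩ := (mem_mvars _ _).1 ha1
        obtain ⟨i, hi, rfl⟩ := Multiset.mem_map.1 hC
        exact ⟨i, hi, Finset.inl_mem_disjSum.2 ((mem_nodes _ _).2 ⟨hv, ha2⟩)⟩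
      · exact ⟨i0, hi0, Finset.inr_mem_disjSum.2 (Finset.mem_univ _)⟩
    have h3 := Finset.card_le_card h2
    rw [Finset.card_disjSum, Finset.card_univ, Fintype.card_fin] at h3
    refine le_trans ?_ h3
    omega

/-- (1) the maximum of `c(F')` over all matching satisfiable
sub-multisets `F' ≤ F` equals `c(F) - δ*(F)`; (2) `F` is matching satisfiable iff
`δ*(F) = 0`. -/
theorem max_matching_sat_card_and_char
    (hD : ∀ v, (D v).Nonempty) (F : Multiset (Clause D)) :
    IsGreatest {k : ℤ | ∃ F' ≤ F, MatchingSat F' ∧ (Multiset.card F' : ℤ) = k}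
      ((Multiset.card F : ℤ) - deltaStar F) ∧
    (MatchingSat F ↔ deltaStar F = 0) := by
  obtain ⟨F', hle, hm, hc⟩ := lower hD F
  have hu := upper hD F F' hle hm
  refine ⟨⟨⟨F', hle, hm, le_antisymm hu hc⟩, ?_⟩, ?_, ?_⟩
  · rintro k ⟨G, hG, hGm, rfl⟩
    exact upper hD F G hG hGm
  · intro h
    have h1 := upper hD F F le_rfl h
    have h2 := deltaStar_nonneg F
    omega
  · intro h
    have : F' = F := Multiset.eq_of_le_of_card_le hle (by omega)
    exact this ▸ hm

end GCLS
end

section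
/- Let F be a non-empty generalised clause-set all of whose clauses are non-empty. If max_{v∈var(F)} #_v(F) ≤ (min_{v∈var(F)} |D_v| − 1) · min_{C∈F} |C|, then F is matching satisfiable. -/
set_option linter.unusedSectionVars false
set_option linter.unusedVariables false

open scoped Classical

namespace GCLS

variable {V α : Type} [DecidableEq V] [DecidableEq α]

variable {D : V → Finset α}

lemma hall_count (F : Finset (Clause D)) (v : V) (s : Finset {C // C ∈ F}) :
    (s.filter (fun C => v ∈ FinFn.vars C.1)).card ≤ varCount F.val v := by
  have h1 : (s.filter (fun C => v ∈ FinFn.vars C.1)).card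
      = ((s.filter (fun C => v ∈ FinFn.vars C.1)).map (Function.Embedding.subtype _)).card := by
    rw [Finset.card_map]
  rw [h1]
  have h2 : (s.filter (fun C => v ∈ FinFn.vars C.1)).map (Function.Embedding.subtype _)
      ⊆ (D v).biUnion (fun ε => F.filter (fun C => (v, ε) ∈ C.1)) := by
    intro C hC
    simp only [Finset.mem_map, Finset.mem_filter, Function.Embedding.subtype_apply] at hC
    obtain ⟨C', ⟨-, hv⟩, rfl⟩ := hC
    simp only [FinFn.vars, Finset.mem_image] at hv
    obtain ⟨⟨v', ε⟩, hp, rfl⟩ := hv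
    simp only [Finset.mem_biUnion, Finset.mem_filter]
    exact ⟨ε, C'.1.2.1 _ hp, C'.2, hp⟩
  refine (Finset.card_le_card h2).trans (Finset.card_biUnion_le.trans ?_)
  unfold varCount litCount
  refine Finset.sum_le_sum fun ε _ => le_of_eq ?_
  rw [Finset.card_def, Finset.filter_val]

lemma card_vars (C : Clause D) : (FinFn.vars C).card = C.1.card :=
  Finset.card_image_of_injOn fun p hp q hq hh => C.2.2 p hp q hq hh

/-- if `F` is a non-empty clause-set, all of whose clauses are non-empty,
with `max_{v ∈ var(F)} #_v(F) ≤ (min_{v ∈ var(F)} |D_v| − 1) · min_{C ∈ F} |C|`,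
then `F` is matching satisfiable. -/
theorem matching_sat_of_bounded_var_degree
    (hD : ∀ v, (D v).Nonempty) (F : Finset (Clause D))
    (hne : F.Nonempty) (hcl : ∀ C ∈ F, C.1.Nonempty)
    (h : ∀ v ∈ mvars F.val, ∀ w ∈ mvars F.val, ∀ C ∈ F,
        varCount F.val v ≤ ((D w).card - 1) * C.1.card) :
    MatchingSat F.val := by
  have hall : ∀ s : Finset {C // C ∈ F}, s.card ≤
      (s.biUnion (fun C => (FinFn.vars C.1).sigma
        (fun v => Finset.range ((D v).card - 1)))).card := by
    intro s
    obtain ⟨C0, hC0, hmin⟩ := F.exists_min_image (fun C => C.1.card) hne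
    have hk : 0 < C0.1.card := Finset.card_pos.mpr (hcl C0 hC0)
    have e : s.biUnion (fun C => (FinFn.vars C.1).sigma
        (fun v => Finset.range ((D v).card - 1)))
        = (s.biUnion (fun C => FinFn.vars C.1)).sigma
          (fun v => Finset.range ((D v).card - 1)) := by
      ext x
      simp only [Finset.mem_biUnion, Finset.mem_sigma]
      constructor
      · rintro ⟨C, hC, h1, h2⟩
        exact ⟨⟨C, hC, h1⟩, h2⟩
      · rintro ⟨⟨C, hC, h1⟩, h2⟩
        exact ⟨C, hC, h1, h2⟩
    rw [e, Finset.card_sigma]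
    simp only [Finset.card_range]
    refine Nat.le_of_mul_le_mul_right ?_ hk
    calc s.card * C0.1.card = ∑ C ∈ s, C0.1.card := by simp
      _ ≤ ∑ C ∈ s, (FinFn.vars C.1).card :=
          Finset.sum_le_sum fun C _ => by rw [card_vars]; exact hmin C.1 C.2
      _ = ∑ C ∈ s, ((s.biUnion (fun C => FinFn.vars C.1)).filter
            (fun v => v ∈ FinFn.vars C.1)).card := by
          refine Finset.sum_congr rfl fun C hC => congrArg _ ?_
          ext v
          simp only [Finset.mem_filter, Finset.mem_biUnion]
          exact ⟨fun hv => ⟨⟨C, hC, hv⟩, hv⟩, fun hv => hv.2⟩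
      _ = ∑ v ∈ s.biUnion (fun C => FinFn.vars C.1),
            (s.filter (fun C => v ∈ FinFn.vars C.1)).card :=
          Finset.sum_card_bipartiteAbove_eq_sum_card_bipartiteBelow
            (fun (C : {C // C ∈ F}) v => v ∈ FinFn.vars C.1)
      _ ≤ ∑ v ∈ s.biUnion (fun C => FinFn.vars C.1), ((D v).card - 1) * C0.1.card := by
          refine Finset.sum_le_sum fun v hv => (hall_count F v s).trans ?_
          obtain ⟨C, -, hv⟩ := Finset.mem_biUnion.mp hv
          have hm : v ∈ mvars F.val := by
            unfold mvars
            rw [Finset.mem_sup]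
            exact ⟨C.1, by simpa using C.2, hv⟩
          exact h v hm v hm C0 hC0
      _ = _ := by rw [Finset.sum_mul]
  obtain ⟨f, hf, hft⟩ := (Finset.all_card_le_biUnion_card_iff_exists_injective _).mp hall
  refine ⟨F.attach.val.map (fun C => (C.1, ((f C).1, (f C).2))), ?_, ?_, ?_⟩
  · rw [Multiset.map_map]
    exact Multiset.attach_map_val F.val
  · rw [Multiset.map_map]
    refine Multiset.Nodup.map ?_ F.attach.nodup
    intro a b hab
    apply hf
    simp only [Function.comp, Prod.mk.injEq] at hab
    exact Sigma.ext hab.1 (heq_of_eq hab.2)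
  · intro p hp
    obtain ⟨C, -, rfl⟩ := Multiset.mem_map.mp hp
    have := hft C
    simp only [Finset.mem_sigma, Finset.mem_range] at this
    exact this

end GCLS
end

section
/- Let F be a generalised multi-clause-set and φ, ψ partial assignments. If φ∘ψ is matching-satisfying for F, then φ is matching-satisfying for ψ*F. -/
set_option linter.unusedSectionVars false
set_option linter.unusedVariables false

open scoped Classical

namespace GCLS

variable {V α : Type} [DecidableEq V] [DecidableEq α]

variable {D : V → Finset α}

/-- if `φ ∘ ψ` is matching-satisfying for `F`, then `φ` is
matching-satisfying for `ψ * F`. -/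
theorem matchingSatisfying_of_comp
    (hD : ∀ v, (D v).Nonempty) (F : Multiset (Clause D)) (φ ψ : PAssign D)
    (h : MatchingSatisfying (comp φ ψ) F) :
    MatchingSatisfying φ (applyM ψ F) := by
  obtain ⟨P, hF, hN, hP⟩ := h
  refine ⟨(P.filter (fun p => ¬ SatClause ψ p.1)).map
    (fun p => (Clause.restrict ψ p.1, p.2)), ?_, ?_, ?_⟩
  · subst hF
    unfold applyM
    rw [Multiset.filter_map, Multiset.map_map, Multiset.map_map]
    rfl
  · rw [Multiset.map_map]
    exact Multiset.nodup_of_le (Multiset.map_le_map (Multiset.filter_le _ P)) hN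
  · intro q hq
    obtain ⟨p, hp, rfl⟩ := Multiset.mem_map.mp hq
    obtain ⟨hpP, hns⟩ := Multiset.mem_filter.mp hp
    obtain ⟨hlt, ε, hε, ε', hε', hne⟩ := hP p hpP
    refine ⟨hlt, ε, ?_, ε', ?_, hne⟩
    · refine Finset.mem_sdiff.mpr ⟨hε, fun hψ => ?_⟩
      rcases Finset.mem_union.mp hε' with h1 | h1
      · exact hns ⟨_, hε, ε', h1, hne⟩
      · exact (Finset.mem_filter.mp h1).2 (Finset.mem_image.mpr ⟨_, hψ, rfl⟩)
    · rcases Finset.mem_union.mp hε' with h1 | h1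
      · exact absurd ⟨_, hε, ε', h1, hne⟩ hns
      · exact (Finset.mem_filter.mp h1).1

end GCLS
end

section
/- For every satisfiable generalised multi-clause-set F there exists a partial assignment φ that satisfies F (i.e., φ*F is empty) and is matching-maximum for F. -/
set_option linter.unusedSectionVars false
set_option linter.unusedVariables false

open scoped Classical

namespace GCLS

variable {V α : Type} [DecidableEq V] [DecidableEq α]

variable {D : V → Finset α}

/-- Total-assignment version of a satisfying assignment with a matching. -/
structure OKState {I : Type} (C : I → Clause D) (A : V → α) (M : I → Option (V × ℕ)) : Prop where
  dom : ∀ v, A v ∈ D v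
  sat : ∀ i, ∃ l ∈ (C i).1, A l.1 ≠ l.2
  edge : ∀ i x, M i = some x → x.2 < (D x.1).card - 1 ∧ ∃ ε, (x.1, ε) ∈ (C i).1 ∧ A x.1 ≠ ε
  inj : ∀ i j x, M i = some x → M j = some x → i = j

noncomputable def msupp {I : Type} [Fintype I] (M : I → Option (V × ℕ)) : Finset I :=
  Finset.univ.filter (fun i => (M i).isSome)

noncomputable def magree {I : Type} [Fintype I] (M M' : I → Option (V × ℕ)) : Finset I :=
  Finset.univ.filter (fun i => (M i).isSome ∧ M i = M' i)

lemma exists_free {I : Type} [Fintype I] (M M' : I → Option (V × ℕ))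
    (hinj' : ∀ i j x, M' i = some x → M' j = some x → i = j)
    (hlt : (msupp M).card < (msupp M').card) :
    ∃ c w, M' c = some w ∧ ∀ i, M i ≠ some w := by
  by_contra hcon
  push Not at hcon
  have : ∀ c, ∃ i, (M' c).isSome → (M i = M' c ∧ (M i).isSome) := by
    intro c
    by_cases h : (M' c).isSome
    · obtain ⟨w, hw⟩ := Option.isSome_iff_exists.mp h
      obtain ⟨i, hi⟩ := hcon c w hw
      exact ⟨i, fun _ => ⟨by rw [hi, hw], by simp [hi]⟩⟩
    · exact ⟨c, fun h' => absurd h' h⟩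
  choose f hf using this
  refine absurd (Finset.card_le_card_of_injOn f (s := msupp M') (t := msupp M) ?_ ?_) (by omega)
  · intro c hc
    have hc' : (M' c).isSome := by simpa [msupp] using hc
    simpa [msupp] using (hf c hc').2
  · intro c hc d hd hcd
    have hc' : (M' c).isSome := by simpa [msupp] using hc
    have hd' : (M' d).isSome := by simpa [msupp] using hd
    obtain ⟨w, hw⟩ := Option.isSome_iff_exists.mp hc'
    refine hinj' c d w hw ?_
    rw [← (hf d hd').1, ← hcd, (hf c hc').1, hw]

/-- Hall step. -/
lemma hall_step {I : Type} [Fintype I] (C : I → Clause D) (A : V → α)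
    (M : I → Option (V × ℕ)) (h : OKState C A M) (w : V × ℕ)
    (hw : w.2 < (D w.1).card - 1) (hfree : ∀ i, M i ≠ some w) :
    (∃ M1, OKState C A M1 ∧ (msupp M).card < (msupp M1).card) ∨
    ∃ W : Set V, w.1 ∈ W ∧ ∀ i v ε, v ∈ W → (v, ε) ∈ (C i).1 → A v ≠ ε →
      ∃ x, M i = some x ∧ x.1 ∈ W := by
  let val : Option {i // (M i).isSome} → V × ℕ := fun o => o.elim w (fun i => (M i.1).get i.2)
  have hval : ∀ i : {i // (M i).isSome}, M i.1 = some (val (some i)) := by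
    intro i; simp [val]
  have hvinj : Function.Injective val := by
    intro a b hab
    rcases a with _ | a <;> rcases b with _ | b
    · rfl
    · exact absurd ((hval b).trans (congrArg some hab.symm)) (hfree b.1)
    · exact absurd ((hval a).trans (congrArg some hab)) (hfree a.1)
    · exact congrArg some (Subtype.ext (h.inj _ _ _ (hval a) ((hval b).trans (congrArg some hab.symm))))
  have hvb : ∀ a, (val a).2 < (D (val a).1).card - 1 := by
    intro a
    rcases a with _ | a
    · exact hw
    · exact (h.edge _ _ (hval a)).1
  let t : Option {i // (M i).isSome} → Finset I := fun a =>
    Finset.univ.filter (fun j => ∃ ε, ((val a).1, ε) ∈ (C j).1 ∧ A (val a).1 ≠ ε)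
  by_cases hall : ∀ s : Finset (Option {i // (M i).isSome}), s.card ≤ (s.biUnion t).card
  · left
    obtain ⟨f, hfi, hft⟩ := (Finset.all_card_le_biUnion_card_iff_exists_injective t).mp hall
    let M1 : I → Option (V × ℕ) := fun j => if hj : ∃ a, f a = j then some (val hj.choose) else none
    have hM1 : ∀ a, M1 (f a) = some (val a) := by
      intro a
      have hj : ∃ b, f b = f a := ⟨a, rfl⟩
      simp only [M1, dif_pos hj]
      rw [hfi hj.choose_spec]
    have hM1' : ∀ j x, M1 j = some x → ∃ a, f a = j ∧ val a = x := by
      intro j x hx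
      by_cases hj : ∃ a, f a = j
      · obtain ⟨a, rfl⟩ := hj
        exact ⟨a, rfl, by rw [hM1] at hx; exact Option.some.inj hx⟩
      · simp [M1, dif_neg hj] at hx
    refine ⟨M1, ⟨h.dom, h.sat, ?_, ?_⟩, ?_⟩
    · intro j x hx
      obtain ⟨a, rfl, rfl⟩ := hM1' j x hx
      exact ⟨hvb a, by simpa [t] using hft a⟩
    · intro i j x hi hj
      obtain ⟨a, rfl, rfl⟩ := hM1' i x hi
      obtain ⟨b, rfl, hb⟩ := hM1' j _ hj
      rw [hvinj hb]
    · have h1 : (Finset.univ.image f) ⊆ msupp M1 := by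
        intro j hj
        obtain ⟨a, -, rfl⟩ := Finset.mem_image.mp hj
        simp [msupp, hM1]
      have h2 := Finset.card_le_card h1
      rw [Finset.card_image_of_injective _ hfi, Finset.card_univ, Fintype.card_option,
        Fintype.card_subtype] at h2
      have : (msupp M).card = (Finset.univ.filter (fun i => (M i).isSome = true)).card := rfl
      omega
  · right
    push Not at hall
    obtain ⟨T, hT⟩ := hall
    let T0 : Finset I := (T.eraseNone).map (Function.Embedding.subtype _)
    have hT0 : T0 ⊆ T.biUnion t := by
      intro i hi
      obtain ⟨j, hj, rfl⟩ := Finset.mem_map.mp hi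
      rw [Finset.mem_eraseNone] at hj
      refine Finset.mem_biUnion.mpr ⟨_, hj, ?_⟩
      simpa [t] using (h.edge _ _ (hval j)).2
    have hc0 : T0.card = T.eraseNone.card := Finset.card_map _
    have hTsub : T ⊆ insert none (T.eraseNone.map Function.Embedding.some) := by
      intro a ha
      rcases a with _ | a <;> simp [ha]
    have hc1 := Finset.card_le_card hTsub
    have hc2 := Finset.card_insert_le (none) (T.eraseNone.map Function.Embedding.some)
    rw [Finset.card_map] at hc2
    have heq : T0 = T.biUnion t := Finset.eq_of_subset_of_card_le hT0 (by omega)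
    have hnone : none ∈ T := by
      by_contra hn
      have hs : T ⊆ (T.eraseNone.map Function.Embedding.some) := by
        intro a ha
        rcases a with _ | a
        · exact absurd ha hn
        · simp [ha]
      have := Finset.card_le_card hs
      rw [Finset.card_map] at this
      have := congrArg Finset.card heq
      omega
    refine ⟨{v | ∃ a ∈ T, (val a).1 = v}, ⟨none, hnone, rfl⟩, ?_⟩
    rintro i v ε ⟨a, ha, rfl⟩ hC hA
    have hi : i ∈ T.biUnion t :=
      Finset.mem_biUnion.mpr ⟨a, ha, by simpa [t] using ⟨ε, hC, hA⟩⟩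
    rw [← heq] at hi
    obtain ⟨j, hj, rfl⟩ := Finset.mem_map.mp hi
    rw [Finset.mem_eraseNone] at hj
    exact ⟨_, hval j, _, hj, rfl⟩

/-- A value for `v` avoiding all literals matched to `v`. -/
lemma exists_value {I : Type} [Fintype I] (C : I → Clause D) (hD : ∀ v, (D v).Nonempty)
    (M : I → Option (V × ℕ)) (hb : ∀ i x, M i = some x → x.2 < (D x.1).card - 1)
    (hinj : ∀ i j x, M i = some x → M j = some x → i = j) (v : V) :
    ∃ a ∈ D v, ∀ i k ε, M i = some (v, k) → (v, ε) ∈ (C i).1 → a ≠ ε := by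
  by_contra hcon
  push Not at hcon
  have hI : Nonempty I := by
    obtain ⟨a, ha⟩ := hD v
    obtain ⟨i, -⟩ := hcon a ha
    exact ⟨i⟩
  choose! I' K hK using hcon
  have hK' : ∀ a ∈ D v, M (I' a) = some (v, K a) ∧ (v, a) ∈ (C (I' a)).1 := by
    intro a ha
    obtain ⟨ε, h1, h2, h3⟩ := hK a ha
    exact ⟨h1, h3 ▸ h2⟩
  have := Finset.card_le_card_of_injOn K (s := D v) (t := Finset.range ((D v).card - 1)) ?_ ?_
  · have := (hD v).card_pos
    rw [Finset.card_range] at *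
    omega
  · intro a ha
    simpa using hb _ _ (hK' a ha).1
  · intro a ha b hb' hab
    have h1 := hK' a ha
    have h2 := hK' b hb'
    have : I' a = I' b := hinj _ _ _ h1.1 (by rw [h2.1, hab])
    have h3 := (C (I' a)).2.2 _ h1.2 (v, b) (this ▸ h2.2) rfl
    exact congrArg Prod.snd h3

lemma core_step {I : Type} [Fintype I] (C : I → Clause D) (hD : ∀ v, (D v).Nonempty)
    (M' : I → Option (V × ℕ))
    (hM' : ∀ i x, M' i = some x → x.1 ∈ FinFn.vars (C i) ∧ x.2 < (D x.1).card - 1)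
    (hinj' : ∀ i j x, M' i = some x → M' j = some x → i = j)
    (A : V → α) (M : I → Option (V × ℕ)) (h : OKState C A M)
    (hlt : (msupp M).card < (msupp M').card) :
    ∃ A1 M1, OKState C A1 M1 ∧ ((msupp M).card < (msupp M1).card ∨
      ((msupp M).card = (msupp M1).card ∧ (magree M M').card < (magree M1 M').card)) := by
  obtain ⟨c, w, hcw, hfree⟩ := exists_free M M' hinj' hlt
  obtain ⟨hwv, hwb⟩ := hM' c w hcw
  rcases hall_step C A M h w hwb hfree with ⟨M1, h1, h2⟩ | ⟨W, hwW, hW⟩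
  · exact ⟨A, M1, h1, Or.inl h2⟩
  let M1 := Function.update M c (some w)
  have hM1c : M1 c = some w := by simp [M1]
  have hM1n : ∀ i, i ≠ c → M1 i = M i := fun i hi => by simp [M1, hi]
  have hb1 : ∀ i x, M1 i = some x → x.2 < (D x.1).card - 1 ∧ x.1 ∈ FinFn.vars (C i) := by
    intro i x hx
    by_cases hi : i = c
    · subst hi
      rw [hM1c] at hx; cases hx
      exact ⟨hwb, hwv⟩
    · rw [hM1n i hi] at hx
      obtain ⟨h1, ε, h2, -⟩ := h.edge i x hx
      exact ⟨h1, Finset.mem_image.mpr ⟨_, h2, rfl⟩⟩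
  have hinj1 : ∀ i j x, M1 i = some x → M1 j = some x → i = j := by
    intro i j x hi hj
    by_cases hic : i = c <;> by_cases hjc : j = c
    · rw [hic, hjc]
    · subst hic
      rw [hM1c] at hi; cases hi
      rw [hM1n j hjc] at hj
      exact absurd hj (hfree j)
    · subst hjc
      rw [hM1c] at hj; cases hj
      rw [hM1n i hic] at hi
      exact absurd hi (hfree i)
    · rw [hM1n i hic] at hi
      rw [hM1n j hjc] at hj
      exact h.inj i j x hi hj
  choose B hBD hB using exists_value C hD M1 (fun i x hx => (hb1 i x hx).1) hinj1
  let A1 : V → α := fun v => if v ∈ W then B v else A v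
  have hA1W : ∀ v ∈ W, A1 v = B v := fun v hv => by simp [A1, hv]
  have hA1n : ∀ v, v ∉ W → A1 v = A v := fun v hv => by simp [A1, hv]
  have hedge : ∀ i x, M1 i = some x → ∃ ε, (x.1, ε) ∈ (C i).1 ∧ A1 x.1 ≠ ε := by
    intro i x hx
    by_cases hxW : x.1 ∈ W
    · obtain ⟨-, hv⟩ := hb1 i x hx
      obtain ⟨⟨v, ε⟩, hp, hpv⟩ := Finset.mem_image.mp hv
      dsimp at hpv
      subst hpv
      exact ⟨ε, hp, by rw [hA1W _ hxW]; exact hB _ i x.2 ε hx hp⟩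
    · have hi : i ≠ c := by
        rintro rfl
        rw [hM1c] at hx; cases hx
        exact hxW hwW
      rw [hM1n i hi] at hx
      rw [hA1n _ hxW]
      exact (h.edge i x hx).2
  refine ⟨A1, M1, ⟨?_, ?_, ?_, hinj1⟩, ?_⟩
  · intro v
    by_cases hv : v ∈ W
    · rw [hA1W v hv]; exact hBD v
    · rw [hA1n v hv]; exact h.dom v
  · intro i
    obtain ⟨⟨v, ε⟩, hl, hA⟩ := h.sat i
    by_cases hv : v ∈ W
    · obtain ⟨x, hx, hxW⟩ := hW i v ε hv hl hA
      have : ∃ y, M1 i = some y := by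
        by_cases hi : i = c
        · exact ⟨w, by rw [hi, hM1c]⟩
        · exact ⟨x, by rw [hM1n i hi, hx]⟩
      obtain ⟨y, hy⟩ := this
      obtain ⟨ε', h1, h2⟩ := hedge i y hy
      exact ⟨_, h1, h2⟩
    · exact ⟨_, hl, by dsimp; rw [hA1n v hv]; exact hA⟩
  · intro i x hx
    exact ⟨(hb1 i x hx).1, hedge i x hx⟩
  · have hsub : msupp M ⊆ msupp M1 := by
      intro i hi
      by_cases hic : i = c
      · simp [msupp, hic, hM1c]
      · simpa [msupp, hM1n i hic] using hi
    have hsub2 : magree M M' ⊂ magree M1 M' := by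
      rw [Finset.ssubset_iff_of_subset]
      · refine ⟨c, by simp [magree, hM1c, hcw], ?_⟩
        simp only [magree, Finset.mem_filter, not_and]
        intro _ _ h3
        exact hfree c (h3.trans hcw)
      · intro i hi
        by_cases hic : i = c
        · simp [magree, hic, hM1c, hcw]
        · simpa [magree, hM1n i hic] using hi
    have h1 := Finset.card_le_card hsub
    have h2 := Finset.card_lt_card hsub2
    omega

lemma core {I : Type} [Fintype I] (C : I → Clause D) (hD : ∀ v, (D v).Nonempty)
    (M' : I → Option (V × ℕ))
    (hM' : ∀ i x, M' i = some x → x.1 ∈ FinFn.vars (C i) ∧ x.2 < (D x.1).card - 1)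
    (hinj' : ∀ i j x, M' i = some x → M' j = some x → i = j) (n : ℕ) :
    ∀ (A : V → α) (M : I → Option (V × ℕ)), OKState C A M →
    (Fintype.card I - (msupp M).card) * (Fintype.card I + 1)
      + (Fintype.card I - (magree M M').card) ≤ n →
    ∃ A1 M1, OKState C A1 M1 ∧ (msupp M').card ≤ (msupp M1).card := by
  induction n with
  | zero =>
    intro A M h hn
    refine ⟨A, M, h, ?_⟩
    have h1 : (msupp M').card ≤ Fintype.card I := Finset.card_le_univ _
    have h2 : (Fintype.card I - (msupp M).card) * (Fintype.card I + 1) = 0 := by omega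
    rcases Nat.mul_eq_zero.mp h2 with h2 | h2 <;> omega
  | succ n ih =>
    intro A M h hn
    by_cases hlt : (msupp M).card < (msupp M').card
    · obtain ⟨A1, M1, h1, h2⟩ := core_step C hD M' hM' hinj' A M h hlt
      refine ih A1 M1 h1 ?_
      have e1 : (msupp M1).card ≤ Fintype.card I := Finset.card_le_univ _
      have e2 : (magree M1 M').card ≤ Fintype.card I := Finset.card_le_univ _
      rcases h2 with h2 | ⟨h2, h3⟩
      · obtain ⟨d, hd⟩ : ∃ d, Fintype.card I - (msupp M).card
            = (Fintype.card I - (msupp M1).card) + 1 + d :=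
          ⟨Fintype.card I - (msupp M).card - ((Fintype.card I - (msupp M1).card) + 1), by omega⟩
        rw [hd] at hn
        have : (Fintype.card I - (msupp M1).card) * (Fintype.card I + 1) + (Fintype.card I + 1) ≤
          (Fintype.card I - (msupp M1).card + 1 + d) * (Fintype.card I + 1) := by nlinarith
        omega
      · rw [h2] at hn
        omega
    · exact ⟨A, M, h, by omega⟩

lemma satClause_of_applyM {φ : PAssign D} {F : Multiset (Clause D)} :
    applyM φ F = 0 ↔ ∀ C ∈ F, SatClause φ C := by
  simp [applyM, Multiset.filter_eq_nil]

/-- Encode a matching via an index type. -/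
lemma encode (F : Multiset (Clause D)) (P : Multiset (Clause D × (V × ℕ)))
    (h1 : P.map Prod.fst ≤ F) (h2 : (P.map Prod.snd).Nodup)
    (h3 : ∀ p ∈ P, p.2.1 ∈ FinFn.vars p.1 ∧ p.2.2 < (D p.2.1).card - 1) :
    ∃ (I : Type) (_ : Fintype I) (C : I → Clause D) (M' : I → Option (V × ℕ)),
      (Finset.univ : Finset I).val.map C = F ∧
      (∀ i x, M' i = some x → x.1 ∈ FinFn.vars (C i) ∧ x.2 < (D x.1).card - 1) ∧
      (∀ i j x, M' i = some x → M' j = some x → i = j) ∧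
      (msupp M').card = Multiset.card P := by
  obtain ⟨G, rfl⟩ := Multiset.le_iff_exists_add.mp h1
  induction P using Quotient.inductionOn with | _ p
  induction G using Quotient.inductionOn with | _ g
  simp only [Multiset.quot_mk_to_coe, Multiset.map_coe, Multiset.coe_nodup, Multiset.mem_coe] at *
  refine ⟨Fin p.length ⊕ Fin g.length, inferInstance, Sum.elim (fun i => p[i].1) (fun i => g[i]),
    Sum.elim (fun i => some p[i].2) (fun _ => none), ?_, ?_, ?_, ?_⟩
  · rw [← Finset.univ_disjSum_univ, Finset.val_disjSum, Multiset.disjSum, Multiset.map_add,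
      Multiset.map_map, Multiset.map_map]
    congr 1
    · simp only [Function.comp_def, Sum.elim_inl, Fin.univ_val_map]
      congr 1
      apply List.ext_get <;> simp
    · simp only [Function.comp_def, Sum.elim_inr, Fin.univ_val_map]
      congr 1
      apply List.ext_get <;> simp
  · rintro (i | i) x hx
    · simp only [Sum.elim_inl, Option.some.injEq] at hx
      subst hx
      exact h3 _ (List.getElem_mem _)
    · simp at hx
  · rintro (i | i) (j | j) x hi hj
    · simp only [Sum.elim_inl, Option.some.injEq] at hi hj
      have := List.nodup_iff_injective_getElem.mp h2
      have h4 := @this ⟨i, by simp⟩ ⟨j, by simp⟩ (by simpa using hi.trans hj.symm)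
      congr 1
      ext
      simpa using h4
    · simp at hj
    · simp at hi
    · simp at hi
  · have : msupp (Sum.elim (fun i : Fin p.length => some p[i].2) (fun _ : Fin g.length => none))
      = Finset.univ.map Function.Embedding.inl := by
      ext i
      rcases i with i | i <;> simp [msupp]
    rw [this]
    simp

/-- Decode a matching. -/
lemma decode {I : Type} [Fintype I] (C : I → Clause D) (M : I → Option (V × ℕ))
    (hinj : ∀ i j x, M i = some x → M j = some x → i = j) :
    ∃ P : Multiset (Clause D × (V × ℕ)),
      P.map Prod.fst ≤ (Finset.univ : Finset I).val.map C ∧ (P.map Prod.snd).Nodup ∧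
      (∀ p ∈ P, ∃ i, C i = p.1 ∧ M i = some p.2) ∧ Multiset.card P = (msupp M).card := by
  refine ⟨(msupp M).attach.val.map (fun i => (C i.1, (M i.1).get (by simpa [msupp] using i.2))),
    ?_, ?_, ?_, ?_⟩
  · rw [Multiset.map_map]
    simp only [Function.comp_def, Finset.attach_val]
    refine (Multiset.attach_map_val' (msupp M).val C).le.trans ?_
    exact Multiset.map_le_map (Finset.val_le_iff.mpr (Finset.subset_univ _))
  · rw [Multiset.map_map]
    refine Multiset.Nodup.map_on ?_ (Finset.nodup _)
    intro i _ j _ hij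
    simp only [Function.comp_def] at hij
    apply Subtype.ext
    have hi : (M i.1).isSome := by simpa [msupp] using i.2
    refine hinj i.1 j.1 _ (Option.some_get hi).symm ?_
    rw [hij]; simp
  · intro p hp
    obtain ⟨i, -, rfl⟩ := Multiset.mem_map.mp hp
    exact ⟨i, rfl, by simp⟩
  · rw [Multiset.card_map]
    exact Finset.card_attach

/-- every satisfiable multi-clause-set has a satisfying assignment
which is matching-maximum. -/
theorem exists_satisfying_matching_maximum
    (hD : ∀ v, (D v).Nonempty) (F : Multiset (Clause D)) (hsat : Sat F) :
    ∃ φ : PAssign D, applyM φ F = 0 ∧ MatchingMaximum φ F := by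
  obtain ⟨φ0, h0⟩ := hsat
  rw [satClause_of_applyM] at h0
  have hbd : ∀ Q : Clause D × (V × ℕ) → Prop, BddAbove { k | ∃ P : Multiset (Clause D × (V × ℕ)),
      P.map Prod.fst ≤ F ∧ (P.map Prod.snd).Nodup ∧ (∀ p ∈ P, Q p) ∧ Multiset.card P = k } := by
    intro Q
    refine ⟨Multiset.card F, ?_⟩
    rintro k ⟨P, hP, -, -, rfl⟩
    simpa using Multiset.card_le_card hP
  have hne : ∀ Q : Clause D × (V × ℕ) → Prop, { k | ∃ P : Multiset (Clause D × (V × ℕ)),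
      P.map Prod.fst ≤ F ∧ (P.map Prod.snd).Nodup ∧ (∀ p ∈ P, Q p) ∧
        Multiset.card P = k }.Nonempty := by
    intro Q
    exact ⟨0, 0, by simp⟩
  obtain ⟨P, hP1, hP2, hP3, hP4⟩ := Nat.sSup_mem (hne (fun p =>
    p.2.1 ∈ FinFn.vars p.1 ∧ p.2.2 < (D p.2.1).card - 1)) (hbd _)
  obtain ⟨I, _, C, M', hC, hM', hinj', hcard⟩ := encode F P hP1 hP2 hP3
  have hCF : ∀ i, C i ∈ F := fun i => hC ▸ Multiset.mem_map_of_mem C (Finset.mem_univ i)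
  have hFC : ∀ c ∈ F, ∃ i, C i = c := by
    intro c hc
    rw [← hC] at hc
    obtain ⟨i, -, hi⟩ := Multiset.mem_map.mp hc
    exact ⟨i, hi⟩
  have hA0 : ∀ v, ∃ a ∈ D v, ∀ ε, (v, ε) ∈ φ0.1 → a = ε := by
    intro v
    by_cases hv : ∃ ε, (v, ε) ∈ φ0.1
    · obtain ⟨ε, hε⟩ := hv
      exact ⟨ε, φ0.2.1 _ hε, fun ε' h' => congrArg Prod.snd (φ0.2.2 _ hε _ h' rfl)⟩
    · obtain ⟨a, ha⟩ := hD v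
      exact ⟨a, ha, fun ε h' => absurd ⟨ε, h'⟩ hv⟩
  choose A0 hA0D hA0 using hA0
  have hok0 : OKState C A0 (fun _ => none) := by
    refine ⟨hA0D, ?_, by simp, by simp⟩
    intro i
    obtain ⟨l, hl, ε, hε, hne⟩ := h0 _ (hCF i)
    exact ⟨l, hl, by rw [hA0 _ _ hε]; exact hne⟩
  obtain ⟨A, M, hok, hle⟩ := core C hD M' hM' hinj' _ A0 _ hok0 le_rfl
  let φ : PAssign D := ⟨(mvars F).image (fun v => (v, A v)), by
    constructor
    · intro p hp
      obtain ⟨v, -, rfl⟩ := Finset.mem_image.mp hp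
      exact hok.dom v
    · intro p hp q hq hpq
      obtain ⟨v, -, rfl⟩ := Finset.mem_image.mp hp
      obtain ⟨u, -, rfl⟩ := Finset.mem_image.mp hq
      dsimp at hpq
      rw [hpq]⟩
  have hφ : ∀ i v ε, (v, ε) ∈ (C i).1 → A v ≠ ε → SatLit φ (v, ε) := by
    intro i v ε hv hA
    refine ⟨A v, Finset.mem_image.mpr ⟨v, ?_, rfl⟩, hA⟩
    have : FinFn.vars (C i) ≤ mvars F :=
      Finset.le_sup (f := FinFn.vars) (Multiset.mem_toFinset.mpr (hCF i))
    exact this (Finset.mem_image.mpr ⟨_, hv, rfl⟩)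
  refine ⟨φ, ?_, ?_⟩
  · rw [satClause_of_applyM]
    intro c hc
    obtain ⟨i, rfl⟩ := hFC c hc
    obtain ⟨⟨v, ε⟩, hl, hA⟩ := hok.sat i
    exact ⟨_, hl, hφ i v ε hl hA⟩
  · apply le_antisymm
    · apply csSup_le_csSup (hbd _) (hne _)
      rintro k ⟨P, h1, h2, h3, h4⟩
      refine ⟨P, h1, h2, ?_, h4⟩
      intro p hp
      obtain ⟨h5, ε, h6, -⟩ := h3 p hp
      exact ⟨Finset.mem_image.mpr ⟨_, h6, rfl⟩, h5⟩
    · obtain ⟨R, hR1, hR2, hR3, hR4⟩ := decode C M hok.inj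
      have hnu : nu F = Multiset.card P := hP4.symm
      rw [hnu, ← hcard]
      refine hle.trans ?_
      rw [← hR4]
      refine le_csSup (hbd _) ⟨R, hC ▸ hR1, hR2, ?_, rfl⟩
      intro p hp
      obtain ⟨i, hi1, hi2⟩ := hR3 p hp
      obtain ⟨h5, ε, h6, h7⟩ := hok.edge i _ hi2
      exact ⟨h5, ε, hi1 ▸ h6, hφ i _ _ h6 h7⟩

end GCLS
end

section
/- For every satisfiable generalised multi-clause-set F there exists a partial assignment φ with n(φ) ≤ δ*(F) (where n(φ) := |var(φ)|) such that φ*F is matching satisfiable. -/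
set_option linter.unusedSectionVars false
set_option linter.unusedVariables false

open scoped Classical

namespace GCLS

variable {V α : Type} [DecidableEq V] [DecidableEq α]

variable {D : V → Finset α}

section Aux

variable {ι : Type} [Fintype ι]

/-- Variables of the clauses with index in `K`. -/
noncomputable def NN (c : ι → Clause D) (K : Finset ι) : Finset V :=
  K.biUnion (fun i => FinFn.vars (c i))

/-- Indices of unsatisfied clauses. -/
noncomputable def UU (c : ι → Clause D) (ψ : PAssign D) : Finset ι :=
  Finset.univ.filter (fun i => ¬ SatClause ψ (c i))

/-- Deficiency relative to the variables outside `A`. -/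
noncomputable def ff (c : ι → Clause D) (A : Finset V) (K : Finset ι) : ℤ :=
  (K.card : ℤ) - ∑ v ∈ NN c K \ A, ((D v).card - 1 : ℤ)

/-- Hall's condition for the unsatisfied clauses. -/
def GoodA (c : ι → Clause D) (ψ : PAssign D) : Prop :=
  ∀ K ⊆ UU c ψ, ff c (FinFn.vars ψ) K ≤ 0

lemma wnonneg (hD : ∀ v, (D v).Nonempty) (v : V) : (0 : ℤ) ≤ ((D v).card - 1 : ℤ) := by
  have := (hD v).card_pos
  omega

lemma ff_super (hD : ∀ v, (D v).Nonempty) (c : ι → Clause D) (A : Finset V) (X Y : Finset ι) :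
    ff c A X + ff c A Y ≤ ff c A (X ∪ Y) + ff c A (X ∩ Y) := by
  unfold ff
  have h1 : NN c (X ∪ Y) \ A = (NN c X \ A) ∪ (NN c Y \ A) := by
    ext v; simp only [NN, Finset.mem_sdiff, Finset.mem_biUnion, Finset.mem_union]; grind
  have h2 : NN c (X ∩ Y) \ A ⊆ (NN c X \ A) ∩ (NN c Y \ A) := by
    intro v; simp only [NN, Finset.mem_sdiff, Finset.mem_biUnion, Finset.mem_inter]; grind
  have h3 := Finset.sum_union_inter (s₁ := NN c X \ A) (s₂ := NN c Y \ A)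
    (f := fun v => ((D v).card - 1 : ℤ))
  have h4 := Finset.sum_le_sum_of_subset_of_nonneg (f := fun v => ((D v).card - 1 : ℤ)) h2
    (fun v _ _ => wnonneg hD v)
  have h5 := Finset.card_union_add_card_inter X Y
  rw [h1]
  zify at h5
  linarith

lemma vars_restrictVars (ψ : PAssign D) (W : Finset V) (h : W ⊆ FinFn.vars ψ) :
    FinFn.vars (FinFn.restrictVars ψ W) = W := by
  ext v
  simp only [FinFn.vars, FinFn.restrictVars, Finset.mem_image, Finset.mem_filter]
  constructor
  · rintro ⟨p, ⟨_, h2⟩, rfl⟩; exact h2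
  · intro hv
    have := h hv
    simp only [FinFn.vars, Finset.mem_image] at this
    obtain ⟨p, hp, rfl⟩ := this
    exact ⟨p, ⟨hp, hv⟩, rfl⟩

lemma sat_of_sat {ψ : PAssign D} {C : Clause D} (h : SatClause ψ C) :
    ∃ x ∈ FinFn.vars C, x ∈ FinFn.vars ψ ∧ ∀ W : Finset V, x ∈ W →
      SatClause (FinFn.restrictVars ψ W) C := by
  obtain ⟨l, hl, ε, h1, h2⟩ := h
  refine ⟨l.1, Finset.mem_image_of_mem _ hl, ?_, ?_⟩
  · exact Finset.mem_image.2 ⟨_, h1, rfl⟩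
  · intro W hW
    exact ⟨l, hl, ε, Finset.mem_filter.2 ⟨h1, hW⟩, h2⟩

lemma good_matching (c : ι → Clause D) (hD : ∀ v, (D v).Nonempty) (ψ : PAssign D)
    (hg : GoodA c ψ) :
    MatchingSat (applyM ψ ((Finset.univ : Finset ι).val.map c)) := by
  let t : {i // i ∈ UU c ψ} → Finset (V × ℕ) := fun i =>
    (FinFn.vars (c i.1) \ FinFn.vars ψ).biUnion
      (fun v => (Finset.range ((D v).card - 1)).image (fun k => (v, k)))
  have hall : ∀ s : Finset {i // i ∈ UU c ψ}, s.card ≤ (s.biUnion t).card := by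
    intro s
    have h1 := hg (s.map (Function.Embedding.subtype _)) (by
      intro i hi
      simp only [Finset.mem_map, Function.Embedding.coe_subtype] at hi
      obtain ⟨a, _, rfl⟩ := hi
      exact a.2)
    have h2 : s.biUnion t =
        (NN c (s.map (Function.Embedding.subtype _)) \ FinFn.vars ψ).biUnion
        (fun v => (Finset.range ((D v).card - 1)).image (fun k => (v, k))) := by
      ext p
      simp only [t, NN, Finset.mem_biUnion, Finset.mem_sdiff, Finset.mem_map,
        Function.Embedding.coe_subtype]
      constructor
      · rintro ⟨i, hi, v, ⟨h1, h2⟩, h3⟩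
        exact ⟨v, ⟨⟨i.1, ⟨i, hi, rfl⟩, h1⟩, h2⟩, h3⟩
      · rintro ⟨v, ⟨⟨_, ⟨i, hi, rfl⟩, h1⟩, h2⟩, h3⟩
        exact ⟨i, hi, v, ⟨h1, h2⟩, h3⟩
    have h3 : ((s.biUnion t).card : ℤ) =
        ∑ v ∈ NN c (s.map (Function.Embedding.subtype _)) \ FinFn.vars ψ,
          ((D v).card - 1 : ℤ) := by
      rw [h2, Finset.card_biUnion]
      · push_cast
        refine Finset.sum_congr rfl (fun v _ => ?_)
        rw [Finset.card_image_of_injective _ (fun a b h => (Prod.ext_iff.1 h).2),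
          Finset.card_range]
        have := (hD v).card_pos
        omega
      · intro x _ y _ hxy
        rw [Function.onFun, Finset.disjoint_left]
        intro p hp hq
        simp only [Finset.mem_image] at hp hq
        grind
    unfold ff at h1
    rw [← h3, Finset.card_map] at h1
    omega
  obtain ⟨f, hf, hft⟩ := (Finset.all_card_le_biUnion_card_iff_exists_injective t).1 hall
  refine ⟨(UU c ψ).attach.val.map (fun i => (Clause.restrict ψ (c i.1), f i)), ?_, ?_, ?_⟩
  · rw [Multiset.map_map]
    unfold applyM
    rw [Multiset.filter_map, Multiset.map_map]
    have : (Multiset.filter ((fun C => ¬SatClause ψ C) ∘ c) (Finset.univ : Finset ι).val)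
        = (UU c ψ).val := by
      unfold UU
      rw [Finset.filter_val]
      rfl
    rw [this, Finset.attach_val]
    exact Multiset.attach_map_val' (UU c ψ).val (fun i => Clause.restrict ψ (c i))
  · rw [Multiset.map_map]
    exact Multiset.Nodup.map hf (Finset.nodup _)
  · intro p hp
    rw [Multiset.mem_map] at hp
    obtain ⟨i, _, rfl⟩ := hp
    have h := hft i
    simp only [t, Finset.mem_biUnion, Finset.mem_image, Finset.mem_sdiff, Finset.mem_range] at h
    obtain ⟨v, ⟨hv, hv'⟩, k, hk, he⟩ := h
    simp only [← he]
    refine ⟨?_, hk⟩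
    simp only [FinFn.vars, Finset.mem_image] at hv
    obtain ⟨l, hl, rfl⟩ := hv
    refine Finset.mem_image.2 ⟨l, ?_, rfl⟩
    refine Finset.mem_sdiff.2 ⟨hl, fun hl' => hv' ?_⟩
    exact Finset.mem_image_of_mem _ hl'

lemma main_bound (c : ι → Clause D) (hD : ∀ v, (D v).Nonempty) (ψ : PAssign D)
    (hg : GoodA c ψ)
    (hmin : ∀ ψ' : PAssign D, GoodA c ψ' → (FinFn.vars ψ).card ≤ (FinFn.vars ψ').card) :
    ∃ K : Finset ι, ((FinFn.vars ψ).card : ℤ) ≤ ff c ∅ K := by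
  set A := FinFn.vars ψ with hA
  have key : ∀ v ∈ A, ∃ K : Finset ι,
      K ⊆ UU c (FinFn.restrictVars ψ (A.erase v)) ∧
      ((D v).card - 1 : ℤ) + 1 ≤ ff c A K := by
    intro v hv
    have hvars := vars_restrictVars ψ (A.erase v) (Finset.erase_subset _ _)
    have hn : ¬ GoodA c (FinFn.restrictVars ψ (A.erase v)) := by
      intro h
      have := hmin _ h
      rw [hvars] at this
      exact absurd this (not_le.2 (Finset.card_erase_lt_of_mem hv))
    unfold GoodA at hn
    push Not at hn
    obtain ⟨K, hK, hlt⟩ := hn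
    rw [hvars] at hlt
    refine ⟨K, hK, ?_⟩
    by_cases hvK : v ∈ NN c K
    · have : NN c K \ A.erase v = insert v (NN c K \ A) := by
        ext x; simp only [Finset.mem_sdiff, Finset.mem_erase, Finset.mem_insert]; grind
      unfold ff at hlt ⊢
      rw [this, Finset.sum_insert (by simp [hv])] at hlt
      linarith
    · exfalso
      have h1 : NN c K \ A.erase v = NN c K \ A := by
        ext x; simp only [Finset.mem_sdiff, Finset.mem_erase]; grind
      have h2 : K ⊆ UU c ψ := by
        intro i hi
        refine Finset.mem_filter.2 ⟨Finset.mem_univ _, fun hs => ?_⟩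
        obtain ⟨x, hx, hxA, hW⟩ := sat_of_sat hs
        have hxv : x ≠ v := by
          rintro rfl
          exact hvK (Finset.mem_biUnion.2 ⟨i, hi, hx⟩)
        exact (Finset.mem_filter.1 (hK hi)).2 (hW _ (Finset.mem_erase.2 ⟨hxv, hxA⟩))
      have := hg K h2
      unfold ff at hlt this
      rw [h1] at hlt
      linarith
  choose! K hK hKf using key
  have step : ∀ S : Finset V, S ⊆ A →
      ∑ v ∈ S, (((D v).card - 1 : ℤ) + 1) ≤ ff c A (S.biUnion K) := by
    intro S
    induction S using Finset.induction_on with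
    | empty => intro _; simp [ff, NN]
    | insert a S ha ih =>
      intro hS
      have haA : a ∈ A := hS (Finset.mem_insert_self _ _)
      have hSA : S ⊆ A := (Finset.subset_insert _ _).trans hS
      have h1 := ih hSA
      have h2 := hKf a haA
      rw [Finset.sum_insert ha, Finset.biUnion_insert]
      have h3 := ff_super hD c A (K a) (S.biUnion K)
      have h4 : ff c A (K a ∩ S.biUnion K) ≤ 0 := by
        apply hg
        intro i hi
        obtain ⟨hi1, hi2⟩ := Finset.mem_inter.1 hi
        obtain ⟨u, hu, hiu⟩ := Finset.mem_biUnion.1 hi2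
        refine Finset.mem_filter.2 ⟨Finset.mem_univ _, fun hs => ?_⟩
        obtain ⟨x, hx, hxA, hW⟩ := sat_of_sat hs
        by_cases hxa : x = a
        · refine (Finset.mem_filter.1 (hK u (hSA hu) hiu)).2 (hW _ (Finset.mem_erase.2 ⟨?_, hxA⟩))
          rintro rfl
          exact ha (hxa ▸ hu)
        · exact (Finset.mem_filter.1 (hK a haA hi1)).2 (hW _ (Finset.mem_erase.2 ⟨hxa, hxA⟩))
      linarith
  have h1 := step A (Finset.Subset.refl _)
  refine ⟨A.biUnion K, ?_⟩
  rw [Finset.sum_add_distrib] at h1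
  have h2 : NN c (A.biUnion K) \ ∅ ⊆ (NN c (A.biUnion K) \ A) ∪ A := by
    intro x; simp only [Finset.mem_sdiff, Finset.mem_union]; grind
  have h3 := Finset.sum_le_sum_of_subset_of_nonneg (f := fun v => ((D v).card - 1 : ℤ)) h2
    (fun v _ _ => wnonneg hD v)
  rw [Finset.sum_union Finset.sdiff_disjoint] at h3
  simp only [Finset.sum_const, nsmul_eq_mul, mul_one] at h1
  unfold ff at h1 ⊢
  linarith

lemma ff_le_deltaStar (c : ι → Clause D) (K : Finset ι) :
    ff c ∅ K ≤ deltaStar ((Finset.univ : Finset ι).val.map c) := by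
  have hm : mvars (K.val.map c) = NN c K \ ∅ := by
    ext v
    simp [mvars, NN, Finset.mem_sup]
  have : ff c ∅ K = delta (K.val.map c) := by
    unfold delta ff
    rw [hm, Multiset.card_map]
    rfl
  rw [this]
  unfold deltaStar
  apply Finset.le_sup' delta
  rw [Multiset.mem_toFinset, Multiset.mem_powerset]
  exact Multiset.map_le_map (Finset.val_le_iff.2 (Finset.subset_univ K))

end Aux

/-- for every satisfiable multi-clause-set `F` there is a partial
assignment `φ` with `n(φ) ≤ δ*(F)` such that `φ * F` is matching satisfiable. -/
theorem exists_small_assignment_matching_sat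
    (hD : ∀ v, (D v).Nonempty) (F : Multiset (Clause D)) (hsat : Sat F) :
    ∃ φ : PAssign D, ((FinFn.vars φ).card : ℤ) ≤ deltaStar F ∧
      MatchingSat (applyM φ F) := by
  obtain ⟨n, c, rfl⟩ : ∃ (n : ℕ) (c : Fin n → Clause D),
      F = (Finset.univ : Finset (Fin n)).val.map c := by
    refine ⟨F.toList.length, F.toList.get, ?_⟩
    rw [Fin.univ_val_map, List.ofFn_get, Multiset.coe_toList]
  obtain ⟨φ₀, h₀⟩ := hsat
  have hg₀ : GoodA c φ₀ := by
    intro K hK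
    have hU : K = ∅ := by
      rw [Finset.eq_empty_iff_forall_notMem]
      intro i hi
      have h1 := (Finset.mem_filter.1 (hK hi)).2
      unfold applyM at h₀
      rw [Multiset.map_eq_zero, Multiset.filter_eq_nil] at h₀
      exact h₀ (c i) (Multiset.mem_map_of_mem _ (Finset.mem_univ i)) h1
    subst hU
    simp [ff, NN]
  have hex : ∃ k, ∃ φ : PAssign D, GoodA c φ ∧ (FinFn.vars φ).card = k := ⟨_, φ₀, hg₀, rfl⟩
  obtain ⟨φ, hg, hk⟩ := Nat.find_spec hex
  obtain ⟨K, hK⟩ := main_bound c hD φ hg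
    (fun ψ' h => hk ▸ Nat.find_min' hex ⟨ψ', h, rfl⟩)
  exact ⟨φ, hK.trans (ff_le_deltaStar c K), good_matching c hD φ hg⟩

end GCLS
end

section
/- For a generalised multi-clause-set F, the union (taking the maximum of multiplicities) and the intersection (taking the minimum of multiplicities) of any two tight sub-multisets of F are again tight sub-multisets of F. Consequently the tight sub-multisets of F form a lattice with a smallest and a largest element. -/
set_option linter.unusedSectionVars false
set_option linter.unusedVariables false

open scoped Classical

namespace GCLS

variable {V α : Type} [DecidableEq V] [DecidableEq α]

variable {D : V → Finset α}

lemma mvars_union' (A B : Multiset (Clause D)) : mvars (A ∪ B) = mvars A ∪ mvars B := by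
  unfold mvars
  rw [Multiset.toFinset_union, Finset.sup_union]
  rfl

lemma mvars_inter_subset' (A B : Multiset (Clause D)) :
    mvars (A ∩ B) ⊆ mvars A ∩ mvars B := by
  unfold mvars
  rw [Multiset.toFinset_inter]
  exact Finset.subset_inter (Finset.sup_mono Finset.inter_subset_left)
    (Finset.sup_mono Finset.inter_subset_right)

lemma delta_supermod (hD : ∀ v, (D v).Nonempty) (A B : Multiset (Clause D)) :
    delta A + delta B ≤ delta (A ∪ B) + delta (A ∩ B) := by
  unfold delta
  have h1 : (Multiset.card (A ∪ B) : ℤ) + Multiset.card (A ∩ B)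
      = Multiset.card A + Multiset.card B := by
    have := congrArg Multiset.card (Multiset.union_add_inter A B)
    simp only [Multiset.card_add] at this
    exact_mod_cast this
  have h2 := Finset.sum_union_inter (s₁ := mvars A) (s₂ := mvars B)
    (f := fun v => ((D v).card - 1 : ℤ))
  have h3 : ∑ v ∈ mvars (A ∩ B), ((D v).card - 1 : ℤ)
      ≤ ∑ v ∈ mvars A ∩ mvars B, ((D v).card - 1 : ℤ) := by
    apply Finset.sum_le_sum_of_subset_of_nonneg (mvars_inter_subset' A B)
    intro v _ _
    have := (hD v).card_pos
    omega
  rw [mvars_union']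
  linarith

lemma delta_le_star {F A : Multiset (Clause D)} (h : A ≤ F) : delta A ≤ deltaStar F :=
  Finset.le_sup' delta (by simpa using h)

lemma tight_sup_inf (hD : ∀ v, (D v).Nonempty) {F A B : Multiset (Clause D)}
    (hA : Tight F A) (hB : Tight F B) : Tight F (A ∪ B) ∧ Tight F (A ∩ B) := by
  have hu : A ∪ B ≤ F := Multiset.union_le hA.1 hB.1
  have hi : A ∩ B ≤ F := Multiset.inter_le_left.trans hA.1
  have h1 := delta_le_star hu
  have h2 := delta_le_star hi
  have h3 := delta_supermod hD A B
  have h4 := hA.2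
  have h5 := hB.2
  exact ⟨⟨hu, by linarith⟩, ⟨hi, by linarith⟩⟩

lemma tight_exists (F : Multiset (Clause D)) : ∃ A, Tight F A := by
  obtain ⟨A, hA, h⟩ := Finset.exists_mem_eq_sup' (powerset_toFinset_nonempty F) delta
  exact ⟨A, by simpa using hA, h.symm⟩

/-- union (max of multiplicities) and intersection (min of
multiplicities) of tight sub-multisets are tight; consequently the tight
sub-multisets form a lattice with a smallest and a largest element. -/
theorem tight_lattice
    (hD : ∀ v, (D v).Nonempty) (F : Multiset (Clause D)) :
    (∀ F₁ F₂, Tight F F₁ → Tight F F₂ →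
        Tight F (F₁ ∪ F₂) ∧ Tight F (F₁ ∩ F₂)) ∧
    (∃ Fmin, Tight F Fmin ∧ ∀ F', Tight F F' → Fmin ≤ F') ∧
    (∃ Fmax, Tight F Fmax ∧ ∀ F', Tight F F' → F' ≤ Fmax) := by
  refine ⟨fun A B hA hB => tight_sup_inf hD hA hB, ?_, ?_⟩
  · have hex : ∃ n, ∃ A, Tight F A ∧ Multiset.card A = n :=
      let ⟨A, hA⟩ := tight_exists F
      ⟨_, A, hA, rfl⟩
    obtain ⟨A, hA, hc⟩ := Nat.find_spec hex
    refine ⟨A, hA, fun B hB => ?_⟩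
    have h := Nat.find_min' hex ⟨_, (tight_sup_inf hD hA hB).2, rfl⟩
    rw [← hc] at h
    rw [← Multiset.eq_of_le_of_card_le Multiset.inter_le_left h]
    exact Multiset.inter_le_right
  · have hex : ∃ n, ∃ A, Tight F A ∧ Multiset.card F - Multiset.card A = n :=
      let ⟨A, hA⟩ := tight_exists F
      ⟨_, A, hA, rfl⟩
    obtain ⟨A, hA, hc⟩ := Nat.find_spec hex
    refine ⟨A, hA, fun B hB => ?_⟩
    have hU := (tight_sup_inf hD hA hB).1
    have h := Nat.find_min' hex ⟨_, hU, rfl⟩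
    rw [← hc] at h
    have c1 := Multiset.card_le_card hA.1
    have c2 := Multiset.card_le_card hU.1
    rw [Multiset.eq_of_le_of_card_le (Multiset.le_union_left : A ≤ A ∪ B) (by omega)]
    exact Multiset.le_union_right

end GCLS
end
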